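/- Let A = ℚ[t₁, t₂] ⊗ Λ(v₁,…,v₆) with deg v₁ = deg v₂ = deg v₃ = deg v₄ = 3 and deg v₅ = deg v₆ = 7, and let D be the unique derivation of degree +1 on A with D t₁ = D t₂ = 0, D v₁ = D v₂ = D v₃ = D v₄ = 0, D v₅ = v₁v₂t₁ + t₁⁴ and D v₆ = v₁v₃t₁ + v₂v₄t₂ + t₂⁴. Then D ∘ D = 0 and dim_ℚ H(A, D) < ∞. -/

import Mathlib

/-! Write `P = ℚ[t₁, t₂]`. The Leibniz rule makes `D` linear over `P` and makes left
multiplication by each `D vⱼ` commute with `D`; hence `D ∘ D = 0`, because the kernel of `D ∘ D`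
contains `1` and is stable under left multiplication by the generators (`mem_of_stable`).

For finiteness, a cocycle `x` satisfies `D (v₅ x) = (D v₅) x` and `D (v₆ x) = (D v₆) x`, so `D v₅`
and `D v₆` act by zero on cohomology. They differ from `t₁ ^ 4` and `t₂ ^ 4` by nilpotent elements
commuting with the `tᵢ`, so powers of `t₁` and `t₂` act by zero too: `t₁ ^ 7` is a multiple of
`D v₅` (`mul_eq_pow_seven`) and `t₂ ^ 12` a multiple of `D v₆` (`mul_eq_pow_twelve`), the
multipliers being products and sums of cocycles that commute with `D`. Since the whole algebra is
finite over the Noetherian ring `P`, the cocycles form a finitely generated `P`-module, and its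
quotient by the coboundaries, on which `t₁` and `t₂` are nilpotent, is finite-dimensional over `ℚ`
(`finite_cohomology`). -/

/- D v₅ = v₁v₂t₁ + t₁⁴, D v₆ = v₁v₃t₁ + v₂v₄t₂ + t₂⁴ on ℚ[t₁,t₂] ⊗ Λ(v₁,…,v₆), deg v = (3,3,3,3,7,7). -/

open scoped TensorProduct

set_option synthInstance.maxHeartbeats 1000000
set_option maxHeartbeats 1000000

noncomputable section

/-- The free graded-commutative ℚ-algebra `ℚ[t₁,…,t_r] ⊗ Λ(v₁,…,v_n)`:
the tensor product of a polynomial algebra on `r` generators of degree 2 with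
an exterior algebra on `n` generators of odd degrees. -/
abbrev FGCA (r n : ℕ) : Type :=
  MvPolynomial (Fin r) ℚ ⊗[ℚ] ExteriorAlgebra ℚ (Fin n → ℚ)

/-- The degree-2 polynomial generators `tᵢ`. -/
def tg (r n : ℕ) (i : Fin r) : FGCA r n := (MvPolynomial.X i) ⊗ₜ 1

/-- The odd-degree exterior generators `vⱼ`. -/
def vg (r n : ℕ) (j : Fin n) : FGCA r n :=
  1 ⊗ₜ (ExteriorAlgebra.ι ℚ (Pi.single j (1 : ℚ)))

/-- The monomial `t^α · v_S` (with the exterior factors multiplied in increasing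
order of index).  These monomials form a ℚ-basis of `FGCA r n`. -/
def gmon (r n : ℕ) (α : Fin r →₀ ℕ) (S : Finset (Fin n)) : FGCA r n :=
  (MvPolynomial.monomial α (1 : ℚ)) ⊗ₜ
    ((S.sort (· ≤ ·)).map fun j => ExteriorAlgebra.ι ℚ (Pi.single j (1 : ℚ))).prod

/-- The (cohomological) degree of the monomial `t^α · v_S`, where each `tᵢ` has
degree `2` and each `vⱼ` has degree `dv j`. -/
def gdeg (r n : ℕ) (dv : Fin n → ℕ) (α : Fin r →₀ ℕ) (S : Finset (Fin n)) : ℕ :=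
  (α.sum fun _ k => 2 * k) + S.sum dv

/-- The homogeneous part of degree `k` of `FGCA r n`: the span of the monomials
of degree `k`. -/
def homog (r n : ℕ) (dv : Fin n → ℕ) (k : ℕ) : Submodule ℚ (FGCA r n) :=
  Submodule.span ℚ { a | ∃ α S, gdeg r n dv α S = k ∧ a = gmon r n α S }

/-- The graded Leibniz rule for a degree `+1` derivation `D`:
`D(ab) = D(a)·b + (−1)^(deg a) a·D(b)` for homogeneous `a`. -/
def IsLeibniz (r n : ℕ) (dv : Fin n → ℕ) (D : FGCA r n →ₗ[ℚ] FGCA r n) : Prop :=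
  ∀ (p : ℕ) (a b : FGCA r n), a ∈ homog r n dv p →
    D (a * b) = D a * b + ((-1 : ℚ) ^ p) • (a * D b)

/-- `D` raises (cohomological) degree by `1`. -/
def RaisesDegByOne (r n : ℕ) (dv : Fin n → ℕ) (D : FGCA r n →ₗ[ℚ] FGCA r n) : Prop :=
  ∀ (k : ℕ), ∀ a ∈ homog r n dv k, D a ∈ homog r n dv (k + 1)

/-- The cohomology `H(A, D) = ker D / im D` as a ℚ-vector space, realized as the
image of `ker D` in `A ⧸ im D`. -/
abbrev Cohomology (r n : ℕ) (D : FGCA r n →ₗ[ℚ] FGCA r n) : Type :=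
  (LinearMap.ker D).map (LinearMap.range D).mkQ

end

/-! ### Generators of `FGCA r n` -/

lemma tg_mem_homog (r n : ℕ) (dv : Fin n → ℕ) (i : Fin r) : tg r n i ∈ homog r n dv 2 := by
  refine Submodule.subset_span ⟨Finsupp.single i 1, ∅, ?_, ?_⟩
  · simp [gdeg]
  · simp [gmon, tg, MvPolynomial.X]

lemma vg_mem_homog (r n : ℕ) (dv : Fin n → ℕ) (j : Fin n) : vg r n j ∈ homog r n dv (dv j) := by
  refine Submodule.subset_span ⟨0, {j}, ?_, ?_⟩
  · simp [gdeg]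
  · simp [gmon, vg]

lemma one_mem_homog (r n : ℕ) (dv : Fin n → ℕ) : (1 : FGCA r n) ∈ homog r n dv 0 := by
  refine Submodule.subset_span ⟨0, ∅, ?_, ?_⟩
  · simp [gdeg]
  · simp [gmon, Algebra.TensorProduct.one_def]

lemma X_smul_eq (r n : ℕ) (i : Fin r) (x : FGCA r n) :
    (MvPolynomial.X i : MvPolynomial (Fin r) ℚ) • x = tg r n i * x :=
  Algebra.smul_def (MvPolynomial.X i : MvPolynomial (Fin r) ℚ) x

lemma tg_comm (r n : ℕ) (i : Fin r) (x : FGCA r n) : x * tg r n i = tg r n i * x :=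
  (Algebra.commutes (MvPolynomial.X i : MvPolynomial (Fin r) ℚ) x).symm

lemma vg_sq (r n : ℕ) (j : Fin n) : vg r n j * vg r n j = 0 := by
  simp [vg]

lemma vg_swap (r n : ℕ) (i j : Fin n) : 
    vg r n i * vg r n j = (-1 : ℚ) • (vg r n j * vg r n i) := by
  simp only [vg, Algebra.TensorProduct.tmul_mul_tmul, ← TensorProduct.tmul_smul]
  rw [neg_smul, one_smul, eq_neg_of_add_eq_zero_left (ExteriorAlgebra.ι_add_mul_swap _ _)]

/-- A subspace that contains `1` and is stable under left multiplication by the generators is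
the whole algebra. -/
lemma mem_of_stable {r n : ℕ} (M : Submodule ℚ (FGCA r n)) (h1 : 1 ∈ M)
    (ht : ∀ i, ∀ x ∈ M, tg r n i * x ∈ M) (hv : ∀ j, ∀ x ∈ M, vg r n j * x ∈ M)
    (x : FGCA r n) : x ∈ M := by
  have hι : ∀ (m : Fin n → ℚ) (x : FGCA r n), x ∈ M →
      ((1 : MvPolynomial (Fin r) ℚ) ⊗ₜ[ℚ] ExteriorAlgebra.ι ℚ m : FGCA r n) * x ∈ M := by
    intro m x hx
    have hm : ((1 : MvPolynomial (Fin r) ℚ) ⊗ₜ[ℚ] ExteriorAlgebra.ι ℚ m : FGCA r n)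
        = ∑ j, m j • vg r n j := by
      conv_lhs => rw [pi_eq_sum_univ' m]
      simp only [map_sum, map_smul, TensorProduct.tmul_sum, TensorProduct.tmul_smul, vg]
    rw [hm, Finset.sum_mul]
    refine M.sum_mem fun j _ => ?_
    rw [smul_mul_assoc]
    exact M.smul_mem _ (hv j x hx)
  have hl : ∀ l : ExteriorAlgebra ℚ (Fin n → ℚ),
      ((1 : MvPolynomial (Fin r) ℚ) ⊗ₜ[ℚ] l : FGCA r n) ∈ M := by
    intro l
    induction l using CliffordAlgebra.left_induction with
    | algebraMap q =>
      rw [Algebra.algebraMap_eq_smul_one, TensorProduct.tmul_smul]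
      exact M.smul_mem _ h1
    | add x y hx hy =>
      rw [TensorProduct.tmul_add]
      exact M.add_mem hx hy
    | ι_mul x m hx => simpa [ExteriorAlgebra.ι] using hι m _ hx
  have hp : ∀ (p : MvPolynomial (Fin r) ℚ) (x : FGCA r n), x ∈ M → p • x ∈ M := by
    intro p
    induction p using MvPolynomial.induction_on with
    | C a =>
      intro x hx
      rw [← MvPolynomial.algebraMap_eq, algebraMap_smul]
      exact M.smul_mem _ hx
    | add p q hp hq =>
      intro x hx
      rw [add_smul]
      exact M.add_mem (hp x hx) (hq x hx)
    | mul_X p i hp =>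
      intro x hx
      rw [mul_smul, X_smul_eq]
      exact hp _ (ht i x hx)
  induction x using TensorProduct.induction_on with
  | zero => exact M.zero_mem
  | add x y hx hy => exact M.add_mem hx hy
  | tmul p l => simpa [TensorProduct.smul_tmul'] using hp p _ (hl l)

/-! ### Finiteness -/

instance finite_exteriorAlgebra (n : ℕ) :
    Module.Finite ℚ (ExteriorAlgebra ℚ (Fin n → ℚ)) :=
  Module.Finite.of_basis (Pi.basisFun ℚ (Fin n)).ExteriorAlgebra

/-- If `D` is linear over the polynomial ring and every `tᵢ ^ N` maps cocycles to coboundaries,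
then the cohomology is finite-dimensional: the module of cocycles is finitely generated by
Hilbert's basis theorem, and modulo coboundaries only monomials with exponents below `N` matter. -/
lemma finite_cohomology {r n : ℕ} (D : FGCA r n →ₗ[ℚ] FGCA r n)
    (hD : ∀ (p : MvPolynomial (Fin r) ℚ) (x : FGCA r n), D (p • x) = p • D x) (N : ℕ)
    (hN : ∀ i x, D x = 0 → ∃ y, D y = (MvPolynomial.X i : MvPolynomial (Fin r) ℚ) ^ N • x) :
    FiniteDimensional ℚ (Cohomology r n D) := by
  let D' : FGCA r n →ₗ[MvPolynomial (Fin r) ℚ] FGCA r n :=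
    { toFun := D, map_add' := map_add D, map_smul' := hD }
  obtain ⟨s, hs⟩ : (LinearMap.ker D').FG := IsNoetherian.noetherian _
  -- `B` is the box of exponents below `N`, `W` the span of the corresponding multiples of `s`.
  let B : Set (Fin r →₀ ℕ) := Set.Iic (Finsupp.equivFunOnFinite.symm fun _ => N)
  have hB : B.Finite := Set.finite_Iic _
  let T : Set (FGCA r n) :=
    Set.image2 (fun α k => MvPolynomial.monomial α (1 : ℚ) • k) B (s : Set (FGCA r n))
  have hT : T.Finite := hB.image2 _ s.finite_toSet
  have hmono : ∀ (α : Fin r →₀ ℕ), ∀ k ∈ s,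
      MvPolynomial.monomial α (1 : ℚ) • k ∈ Submodule.span ℚ T ⊔ LinearMap.range D := by
    intro α k hk
    have hk0 : D k = 0 := by
      have : k ∈ LinearMap.ker D' := hs ▸ Submodule.subset_span hk
      exact this
    by_cases hα : α ∈ B
    · exact Submodule.mem_sup_left (Submodule.subset_span ⟨α, hα, k, hk, rfl⟩)
    · obtain ⟨i, hi⟩ : ∃ i, N ≤ α i := by
        by_contra! h
        exact hα fun i => (h i).le
      obtain ⟨y, hy⟩ := hN i k hk0
      refine Submodule.mem_sup_right
        ⟨MvPolynomial.monomial (α - Finsupp.single i N) (1 : ℚ) • y, ?_⟩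
      rw [hD, hy, ← mul_smul, MvPolynomial.X_pow_eq_monomial, MvPolynomial.monomial_mul, one_mul,
        tsub_add_cancel_of_le (by simpa using hi)]
  have hker : LinearMap.ker D ≤ Submodule.span ℚ T ⊔ LinearMap.range D := by
    intro x hx
    have hx' : x ∈ Submodule.span (MvPolynomial (Fin r) ℚ) (s : Set (FGCA r n)) := by
      rw [hs]
      exact hx
    obtain ⟨c, -, rfl⟩ := Submodule.mem_span_finset.1 hx'
    refine Submodule.sum_mem _ fun k hk => ?_
    rw [MvPolynomial.as_sum (c k), Finset.sum_smul]
    refine Submodule.sum_mem _ fun α _ => ?_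
    rw [← mul_one (MvPolynomial.coeff α (c k)), ← smul_eq_mul, ← MvPolynomial.smul_monomial,
      smul_assoc]
    exact Submodule.smul_mem _ _ (hmono α k hk)
  have hle : (LinearMap.ker D).map (LinearMap.range D).mkQ
      ≤ (Submodule.span ℚ T).map (LinearMap.range D).mkQ := by
    refine (Submodule.map_mono hker).trans ?_
    rw [Submodule.map_sup, Submodule.mkQ_map_self, sup_bot_eq]
  have : FiniteDimensional ℚ (Submodule.span ℚ T) := FiniteDimensional.span_of_finite ℚ hT
  exact Submodule.finiteDimensional_of_le hle

/-! ### Noncommutative identities -/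

lemma mul_eq_pow_seven {R : Type*} [Ring R] [Algebra ℚ R] {t w : R} (hw : w * w = 0) (hc : w * t = t * w) :
    (t ^ 3 + (-1 : ℚ) • w) * (w * t + t ^ 4) = t ^ 7 := by
  have h : Commute t w := hc.symm
  have h4 : w * t ^ 4 = t ^ 4 * w := (h.pow_left 4).symm
  have h3 : t ^ 3 * (w * t) = t ^ 4 * w := by rw [hc, ← mul_assoc, ← pow_succ]
  have h0 : w * (w * t) = 0 := by rw [← mul_assoc, hw, zero_mul]
  rw [neg_smul, one_smul, ← sub_eq_add_neg, sub_mul, mul_add, mul_add, h3, h4, h0, ← pow_add]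
  abel

lemma mul_eq_pow_twelve {R : Type*} [Ring R] [Algebra ℚ R] {t p q : R} (hp : p * p = 0) (hq : q * q = 0)
    (hpq : q * p = p * q) (htp : p * t = t * p) (htq : q * t = t * q) :
    (t ^ 8 + (-1 : ℚ) • (t ^ 4 * (p + q)) + (p + q) * (p + q)) * (p + q + t ^ 4) = t ^ 12 := by
  have hc : Commute (t ^ 4) (p + q) :=
    (Commute.add_right (show Commute t p from htp.symm) (show Commute t q from htq.symm)).pow_left 4
  have hcube : (p + q) * (p + q) * (p + q) = 0 := by
    have h1 : (p + q) * (p + q) = p * q + p * q := by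
      rw [add_mul, mul_add, mul_add, hp, hq, hpq]
      abel
    have h2 : p * q * (p + q) = 0 := by
      rw [mul_add, mul_assoc, mul_assoc, hq, hpq, ← mul_assoc, hp]
      simp
    rw [h1, add_mul, h2, add_zero]
  generalize p + q = n at hc hcube ⊢
  have e8 : t ^ 8 = t ^ 4 * t ^ 4 := by rw [← pow_add]
  have e12 : t ^ 12 = t ^ 4 * t ^ 4 * t ^ 4 := by rw [← pow_add, ← pow_add]
  rw [e8, e12]
  generalize t ^ 4 = u at hc ⊢
  have h1 : u * n * u = u * u * n := by rw [mul_assoc, ← hc.eq, ← mul_assoc]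
  have h2 : n * n * u = u * n * n := by rw [mul_assoc, ← hc.eq, ← mul_assoc, ← hc.eq]
  rw [neg_smul, one_smul, ← sub_eq_add_neg, add_mul, sub_mul, mul_add, mul_add, mul_add, h1, h2, hcube]
  abel

/-- The square of `ab`, for anticommuting elements `a`, `b` with `a ^ 2 = 0`, vanishes. -/
lemma mul_sq_zero {R : Type*} [Ring R] [Algebra ℚ R] {a b : R} (ha : a * a = 0)
    (hba : b * a = (-1 : ℚ) • (a * b)) : a * b * (a * b) = 0 := by
  rw [mul_assoc, ← mul_assoc b, hba, smul_mul_assoc, mul_smul_comm, ← mul_assoc, ← mul_assoc, ha]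
  simp

lemma vv_comm (r n : ℕ) (a b c : Fin n) :
    vg r n a * vg r n b * vg r n c = vg r n c * (vg r n a * vg r n b) := by
  rw [mul_assoc, vg_swap r n b c, mul_smul_comm, ← mul_assoc, vg_swap r n a c, smul_mul_assoc,
    smul_smul, mul_assoc]
  norm_num

/-! ### The differential -/

noncomputable section

local notation "dv" => (![3, 3, 3, 3, 7, 7] : Fin 6 → ℕ)
local notation "t₁" => tg 2 6 0
local notation "t₂" => tg 2 6 1
local notation "v₁" => vg 2 6 0
local notation "v₂" => vg 2 6 1
local notation "v₃" => vg 2 6 2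
local notation "v₄" => vg 2 6 3
local notation "v₅" => vg 2 6 4
local notation "v₆" => vg 2 6 5

theorem stmt_12 (D : FGCA 2 6 →ₗ[ℚ] FGCA 2 6)
    (hLeib : IsLeibniz 2 6 dv D)
    (hdeg : RaisesDegByOne 2 6 dv D)
    (hD0 : D t₁ = (0 : FGCA 2 6))
    (hD1 : D t₂ = (0 : FGCA 2 6))
    (hD2 : D v₁ = (0 : FGCA 2 6))
    (hD3 : D v₂ = (0 : FGCA 2 6))
    (hD4 : D v₃ = (0 : FGCA 2 6))
    (hD5 : D v₄ = (0 : FGCA 2 6))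
    (hD6 : D v₅ = v₁ * v₂ * t₁ + t₁ ^ 4)
    (hD7 : D v₆ = v₁ * v₃ * t₁ + v₂ * v₄ * t₂ + t₂ ^ 4)
    : D ∘ₗ D = 0 ∧ FiniteDimensional ℚ (Cohomology 2 6 D) := by
  -- The Leibniz rule for left multiplication by a single generator; all `vⱼ` have odd degree.
  have Lt : ∀ i x, D (tg 2 6 i * x) = tg 2 6 i * D x := by
    intro i x
    have h0 : D (tg 2 6 i) = 0 := by fin_cases i <;> assumption
    rw [hLeib 2 _ x (tg_mem_homog 2 6 dv i), h0]
    simp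
  have Lv : ∀ j x, D (vg 2 6 j * x) = D (vg 2 6 j) * x + (-1 : ℚ) • (vg 2 6 j * D x) := by
    intro j x
    have hodd : ((-1 : ℚ) ^ (dv j)) = -1 := by fin_cases j <;> norm_num
    rw [hLeib _ _ x (vg_mem_homog 2 6 dv j), hodd]
  have D1 : D 1 = 0 := by
    have := hLeib 0 1 1 (one_mem_homog 2 6 dv)
    simpa using this
  have Ltp : ∀ i k x, D (tg 2 6 i ^ k * x) = tg 2 6 i ^ k * D x := by
    intro i k x
    induction k with
    | zero => simp
    | succ k ih => rw [pow_succ', mul_assoc, Lt, ih, mul_assoc]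
  -- A product of two closed odd generators commutes with `D`.
  have Lvv : ∀ i j, D (vg 2 6 i) = 0 → D (vg 2 6 j) = 0 → ∀ x,
      D (vg 2 6 i * vg 2 6 j * x) = vg 2 6 i * vg 2 6 j * D x := by
    intro i j hi hj x
    rw [mul_assoc, Lv, hi, Lv, hj]
    simp only [zero_mul, zero_add, mul_smul_comm, smul_smul, mul_assoc]
    norm_num
  have Lvvt : ∀ i j l, D (vg 2 6 i) = 0 → D (vg 2 6 j) = 0 → ∀ x,
      D (vg 2 6 i * vg 2 6 j * tg 2 6 l * x) = vg 2 6 i * vg 2 6 j * tg 2 6 l * D x := by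
    intro i j l hi hj x
    rw [mul_assoc _ (tg 2 6 l), Lvv i j hi hj, Lt, mul_assoc _ (tg 2 6 l)]
  have Lf : ∀ x, D ((v₁ * v₂ * t₁ + t₁ ^ 4) * x) = (v₁ * v₂ * t₁ + t₁ ^ 4) * D x := by
    intro x
    rw [add_mul, map_add, Lvvt _ _ _ hD2 hD3, Ltp, add_mul]
  have Ln : ∀ x, D ((v₁ * v₃ * t₁ + v₂ * v₄ * t₂) * x)
      = (v₁ * v₃ * t₁ + v₂ * v₄ * t₂) * D x := by
    intro x
    rw [add_mul, map_add, Lvvt _ _ _ hD2 hD4, Lvvt _ _ _ hD3 hD5, add_mul]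
  have Lg : ∀ x, D ((v₁ * v₃ * t₁ + v₂ * v₄ * t₂ + t₂ ^ 4) * x)
      = (v₁ * v₃ * t₁ + v₂ * v₄ * t₂ + t₂ ^ 4) * D x := by
    intro x
    rw [add_mul, map_add, Ln, Ltp, ← add_mul]
  have LDv : ∀ j x, D (D (vg 2 6 j) * x) = D (vg 2 6 j) * D x := by
    intro j x
    have hz : ∀ j, D (vg 2 6 j) = 0 → D (D (vg 2 6 j) * x) = D (vg 2 6 j) * D x := by
      intro j h
      simp [h]
    fin_cases j
    · exact hz 0 hD2
    · exact hz 1 hD3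
    · exact hz 2 hD4
    · exact hz 3 hD5
    · change D (D v₅ * x) = D v₅ * D x
      rw [hD6, Lf]
    · change D (D v₆ * x) = D v₆ * D x
      rw [hD7, Lg]
  refine ⟨?_, ?_⟩
  · refine LinearMap.ext fun x => ?_
    refine mem_of_stable (LinearMap.ker (D ∘ₗ D)) ?_ ?_ ?_ x
    · simp [D1]
    · intro i x hx
      have hx' : D (D x) = 0 := hx
      simp [Lt, hx']
    · intro j x hx
      have hx' : D (D x) = 0 := hx
      change D (D (vg 2 6 j * x)) = 0
      rw [Lv, map_add, LDv, map_smul, Lv, hx', mul_zero, smul_zero, add_zero]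
      generalize D (vg 2 6 j) * D x = z
      calc z + (-1 : ℚ) • z = (1 + -1 : ℚ) • z := by rw [add_smul, one_smul]
        _ = 0 := by rw [add_neg_cancel, zero_smul]
  · refine finite_cohomology D ?_ 12 ?_
    · intro p
      induction p using MvPolynomial.induction_on with
      | C a =>
        intro x
        rw [← MvPolynomial.algebraMap_eq, algebraMap_smul, algebraMap_smul, map_smul]
      | add p q hp hq =>
        intro x
        rw [add_smul, map_add, hp, hq, add_smul]
      | mul_X p i hp =>
        intro x
        rw [mul_smul, X_smul_eq, hp, Lt, mul_smul, X_smul_eq]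
    · intro i x hx
      have hX : ∀ k, (MvPolynomial.X i : MvPolynomial (Fin 2) ℚ) ^ k • x = tg 2 6 i ^ k * x := by
        intro k
        induction k with
        | zero => simp
        | succ k ih => rw [pow_succ', mul_smul, ih, X_smul_eq, pow_succ', mul_assoc]
      rw [hX]
      clear hX
      fin_cases i
      · -- `t₁ ^ 7 = (t₁ ^ 3 - v₁ v₂) * D v₅`
        refine ⟨t₁ ^ 5 * ((t₁ ^ 3 + (-1 : ℚ) • (v₁ * v₂)) * (v₅ * x)), ?_⟩
        rw [Ltp, add_mul, map_add, Ltp, smul_mul_assoc, map_smul, Lvv _ _ hD2 hD3, Lv, hx, mul_zero,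
          smul_zero, add_zero, hD6, ← smul_mul_assoc, ← add_mul, ← mul_assoc (_ + _), mul_eq_pow_seven (mul_sq_zero (vg_sq 2 6 0)
          (vg_swap 2 6 1 0)) (tg_comm 2 6 0 _), ← mul_assoc, ← pow_add]
        rfl
      · -- `t₂ ^ 12` is the sum of cubes of `t₂ ^ 4` and the nilpotent part of `D v₆`
        refine ⟨(t₂ ^ 8 + (-1 : ℚ) • (t₂ ^ 4 * (v₁ * v₃ * t₁ + v₂ * v₄ * t₂))
          + (v₁ * v₃ * t₁ + v₂ * v₄ * t₂) * (v₁ * v₃ * t₁ + v₂ * v₄ * t₂)) * (v₆ * x), ?_⟩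
        have hsq : ∀ a b l, (vg 2 6 a * vg 2 6 b * tg 2 6 l) * (vg 2 6 a * vg 2 6 b * tg 2 6 l)
            = 0 := by
          intro a b l
          rw [tg_comm, mul_assoc, ← mul_assoc (_ * _) (tg 2 6 l), tg_comm, mul_assoc (tg 2 6 l),
            mul_sq_zero (vg_sq 2 6 a) (vg_swap 2 6 b a)]
          simp
        have hcomm : (v₂ * v₄ * t₂) * (v₁ * v₃ * t₁) = (v₁ * v₃ * t₁) * (v₂ * v₄ * t₂) := by
          have h : Commute (v₂ * v₄) (v₁ * v₃) :=
            Commute.mul_right (vv_comm 2 6 1 3 0) (vv_comm 2 6 1 3 2)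
          have h0 : ∀ y, Commute y t₁ := fun y => tg_comm 2 6 0 y
          have h1 : ∀ y, Commute t₂ y := fun y => (tg_comm 2 6 1 y).symm
          exact (Commute.mul_left (h.mul_right (h0 _)) (h1 _)).eq
        have Lz : ∀ y, D ((t₂ ^ 8 + (-1 : ℚ) • (t₂ ^ 4 * (v₁ * v₃ * t₁ + v₂ * v₄ * t₂))
            + (v₁ * v₃ * t₁ + v₂ * v₄ * t₂) * (v₁ * v₃ * t₁ + v₂ * v₄ * t₂)) * y)
            = (t₂ ^ 8 + (-1 : ℚ) • (t₂ ^ 4 * (v₁ * v₃ * t₁ + v₂ * v₄ * t₂))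
            + (v₁ * v₃ * t₁ + v₂ * v₄ * t₂) * (v₁ * v₃ * t₁ + v₂ * v₄ * t₂)) * D y := by
          intro y
          generalize v₁ * v₃ * t₁ + v₂ * v₄ * t₂ = m at Ln
          rw [add_mul, add_mul, map_add, map_add, Ltp, smul_mul_assoc, map_smul, mul_assoc, Ltp,
            mul_assoc, Ln, Ln, Ln, add_mul, add_mul, smul_mul_assoc, mul_assoc, mul_assoc]
        rw [Lz, Lv, hx, mul_zero, smul_zero, add_zero, hD7, ← mul_assoc,
          mul_eq_pow_twelve (hsq 0 2 0) (hsq 1 3 1) hcomm (tg_comm 2 6 1 _) (tg_comm 2 6 1 _)]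
        rfl

end
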